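/- arXiv:1101.4821 — 2 statements merged into one kernel-verified Lean document; each statement's English description precedes it below -/
import Mathlib

section
/- Fix a connected stable weighted graph (Γ, w) of genus g with n labeled legs and edge set E = E(Γ). On the closed cone ℝ≥0^E define p ∼ q if and only if the n-pointed metric weighted graphs associated to p and q are isomorphic, and let π̄ : ℝ≥0^E → M̄ := ℝ≥0^E / ∼ be the quotient map, M̄ carrying the quotient topology. Then M̄ is a Hausdorff topological space. -/
/-! Write `E` for the edge set and `π : ℝ≥0^E → M̄` for the quotient map. Since `ℝ≥0^E` is normal and
a closed continuous image of a `T4` space is Hausdorff (`t2Space_of_isClosedMap`), it is enough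
that `π` is closed, i.e. that saturations of closed sets are closed.

An isomorphism witnessing `p ∼ q` only involves the zero sets `S` of `p` and `T` of `q` and an
isomorphism `Γ/S ≅ Γ/T` of weighted graphs, which identifies the face `{S = 0}` of the cone with
the face `{T = 0}` by permuting coordinates. The point (`exists_pull`) is that this identification
respects `∼` on the whole *closed* face, including its boundary: if more coordinates vanish, the
isomorphism descends to the further contractions (`wiso_descend`). Hence the saturation of a closed
set is a finite union of closed sets (`isClosedMap_mk`).

Descent of the isomorphism amounts to functoriality of weighted contractions. For the weights, this
is read off from the fact that `w/S(x) - 1` equals the number of edges contracted to `x` plus the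
sum of `w(v) - 1` over the vertices `v` contracted to `x` (`wcontract_formula`), an expression that
is additive under iterated contraction (`wcontract_nested`). It rests on `|V| ≤ |E| + 1` for
connected graphs, which makes the truncated subtraction in the definition of `b₁` an honest one.
-/

open scoped ENNReal NNReal Classical

/-- A combinatorial graph with `n` labeled legs: a finite nonempty set `V` of vertices, a
finite set `H` of half-edges, an involution `ι` on `H` whose fixed points are exactly the
`n` labeled legs, and an endpoint map `ε : H → V`.  Edges are the pairs `{h, ι h}` with
`ι h ≠ h`. -/
structure LeggedGraph (n : ℕ) where
  V : Type
  H : Type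
  finV : Finite V
  finH : Finite H
  neV : Nonempty V
  ι : H → H
  ι_invol : ∀ h, ι (ι h) = h
  ε : H → V
  leg : Fin n → H
  leg_fix : ∀ i, ι (leg i) = leg i
  leg_inj : Function.Injective leg
  fix_leg : ∀ h, ι h = h → ∃ i, leg i = h

attribute [instance] LeggedGraph.finV LeggedGraph.finH LeggedGraph.neV

namespace LeggedGraph

variable {n : ℕ}

/-- The type of edges of `G`: unordered pairs `{h, ι h}` with `ι h ≠ h`. -/
def Edge (G : LeggedGraph n) : Type :=
  Quot (fun h h' : {h : G.H // G.ι h ≠ h} => (h' : G.H) = G.ι (h : G.H))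

/-- The edge determined by a non-fixed half-edge. -/
def edgeMk (G : LeggedGraph n) (h : G.H) (hne : G.ι h ≠ h) : G.Edge := Quot.mk _ ⟨h, hne⟩

/-- The number of edges of `G`. -/
noncomputable def numEdges (G : LeggedGraph n) : ℕ := Nat.card G.Edge

/-- Two vertices are adjacent if they are the two endpoints of some edge. -/
def adjRel (G : LeggedGraph n) : G.V → G.V → Prop := fun v v' =>
  ∃ h, G.ι h ≠ h ∧ G.ε h = v ∧ G.ε (G.ι h) = v'

/-- The number of connected components of `G`. -/
noncomputable def numComps (G : LeggedGraph n) : ℕ := Nat.card (Quot G.adjRel)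

/-- `G` is connected: any two vertices can be joined by an edge path. -/
def IsConnected (G : LeggedGraph n) : Prop := ∀ v v' : G.V, Relation.EqvGen G.adjRel v v'

/-- The first Betti number `b₁(G) = |E(G)| − |V(G)| + c`, where `c` is the number of
connected components (stated as `|E(G)| + c − |V(G)|`, a natural number). -/
noncomputable def b1 (G : LeggedGraph n) : ℕ := G.numEdges + G.numComps - Nat.card G.V

/-- The valence of a vertex: the number of half-edges based at it (a loop counts twice,
legs count once). -/
noncomputable def valence (G : LeggedGraph n) (v : G.V) : ℕ := Nat.card {h : G.H // G.ε h = v}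

/-- `G` is 3-regular if every vertex has valence `3`. -/
def ThreeRegular (G : LeggedGraph n) : Prop := ∀ v, G.valence v = 3

/-- The genus of the weighted graph `(G, w)`: `b₁(G) + Σ_v w(v)`. -/
noncomputable def genus (G : LeggedGraph n) (w : G.V → ℕ) : ℕ := G.b1 + ∑ᶠ v, w v

/-- Stability of a weighted graph: every vertex of weight `0` has valence at least `3` and
every vertex of weight `1` has valence at least `1`. -/
def Stable (G : LeggedGraph n) (w : G.V → ℕ) : Prop :=
  ∀ v, (w v = 0 → 3 ≤ G.valence v) ∧ (w v = 1 → 1 ≤ G.valence v)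

/-- The set of half-edges of the edges meeting a set `S` of half-edges: this is the
set of half-edges of the edge set determined by `S` (legs and fixed half-edges are
discarded, and the set is closed under the involution). -/
def sym (G : LeggedGraph n) (S : Set G.H) : Set G.H :=
  {h | (h ∈ S ∨ G.ι h ∈ S) ∧ G.ι h ≠ h}

theorem sym_iota_mem {G : LeggedGraph n} {S : Set G.H} {h : G.H} (hh : h ∈ G.sym S) :
    G.ι h ∈ G.sym S := by
  obtain ⟨h1, h2⟩ := hh
  constructor
  · rcases h1 with h1 | h1
    · right; rwa [G.ι_invol]
    · left; exact h1
  · rw [G.ι_invol]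
    exact fun e => h2 e.symm

theorem sym_iota_not_mem {G : LeggedGraph n} {S : Set G.H} {h : G.H} (hh : h ∉ G.sym S) :
    G.ι h ∉ G.sym S := fun hc => by
  have h2 := sym_iota_mem hc
  rw [G.ι_invol] at h2
  exact hh h2

/-- The relation identifying the two endpoints of every edge in `S`. -/
def contrRel (G : LeggedGraph n) (S : Set G.H) : G.V → G.V → Prop := fun v v' =>
  ∃ h ∈ G.sym S, G.ε h = v ∧ G.ε (G.ι h) = v'

/-- The contraction `Γ/S` of the set of edges `S`: its vertices are the connected
components of the graph obtained by removing all edges not in `S`, its half-edges are the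
half-edges not belonging to `S`, and legs are kept. -/
def contract (G : LeggedGraph n) (S : Set G.H) : LeggedGraph n where
  V := Quot (G.contrRel S)
  H := {h : G.H // h ∉ G.sym S}
  finV := inferInstance
  finH := inferInstance
  neV := G.neV.map (Quot.mk _)
  ι := fun h => ⟨G.ι h.1, sym_iota_not_mem h.2⟩
  ι_invol := fun h => Subtype.ext (G.ι_invol h.1)
  ε := fun h => Quot.mk _ (G.ε h.1)
  leg := fun i => ⟨G.leg i, fun hc => hc.2 (G.leg_fix i)⟩
  leg_fix := fun i => Subtype.ext (G.leg_fix i)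
  leg_inj := fun i j hij => G.leg_inj (congrArg Subtype.val hij)
  fix_leg := fun h hh => by
    obtain ⟨i, hi⟩ := G.fix_leg h.1 (congrArg Subtype.val hh)
    exact ⟨i, Subtype.ext hi⟩

/-- The graph `Γ − T` obtained from `G` by keeping only the edges in `S` (and keeping all
vertices and all legs). -/
def restrict (G : LeggedGraph n) (S : Set G.H) : LeggedGraph n where
  V := G.V
  H := {h : G.H // h ∈ G.sym S ∨ ∃ i, G.leg i = h}
  finV := G.finV
  finH := inferInstance
  neV := G.neV
  ι := fun h => ⟨G.ι h.1, by
    rcases h.2 with hm | ⟨i, hi⟩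
    · exact Or.inl (sym_iota_mem hm)
    · refine Or.inr ⟨i, ?_⟩
      rw [← hi]
      exact (G.leg_fix i).symm⟩
  ι_invol := fun h => Subtype.ext (G.ι_invol h.1)
  ε := fun h => G.ε h.1
  leg := fun i => ⟨G.leg i, Or.inr ⟨i, rfl⟩⟩
  leg_fix := fun i => Subtype.ext (G.leg_fix i)
  leg_inj := fun i j hij => G.leg_inj (congrArg Subtype.val hij)
  fix_leg := fun h hh => by
    rcases h.2 with hm | ⟨i, hi⟩
    · exact absurd (congrArg Subtype.val hh) hm.2
    · exact ⟨i, Subtype.ext hi⟩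

/-- The subgraph of `Γ − T` lying over a vertex `x` of the contraction `Γ/S`
(the fiber `σ⁻¹(x)` of the contraction map `σ`), viewed as a graph without legs. -/
def fiber (G : LeggedGraph n) (S : Set G.H) (x : Quot (G.contrRel S)) : LeggedGraph 0 where
  V := {v : G.V // Quot.mk (G.contrRel S) v = x}
  H := {h : G.H // h ∈ G.sym S ∧ Quot.mk (G.contrRel S) (G.ε h) = x}
  finV := inferInstance
  finH := inferInstance
  neV := by
    obtain ⟨v, hv⟩ := Quot.exists_rep x
    exact ⟨⟨v, hv⟩⟩
  ι := fun h => ⟨G.ι h.1, sym_iota_mem h.2.1, by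
    have h2 : Quot.mk (G.contrRel S) (G.ε h.1) = Quot.mk (G.contrRel S) (G.ε (G.ι h.1)) :=
      Quot.sound ⟨h.1, h.2.1, rfl, rfl⟩
    rw [← h2]
    exact h.2.2⟩
  ι_invol := fun h => Subtype.ext (G.ι_invol h.1)
  ε := fun h => ⟨G.ε h.1, h.2.2⟩
  leg := Fin.elim0
  leg_fix := fun i => i.elim0
  leg_inj := fun i => i.elim0
  fix_leg := fun h hh => absurd (congrArg Subtype.val hh) h.2.1.2

/-- The weight function `w/S` of the weighted contraction of `(G, w)`:
`w/S(x) = b₁(σ⁻¹(x)) + Σ_{v ∈ σ⁻¹(x)} w(v)`. -/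
noncomputable def wcontract (G : LeggedGraph n) (w : G.V → ℕ) (S : Set G.H) :
    (G.contract S).V → ℕ := fun x =>
  (G.fiber S x).b1 + ∑ᶠ v : {v : G.V // Quot.mk (G.contrRel S) v = x}, w v.1

/-- Isomorphism of graphs with `n` labeled legs. -/
def GIso (G G' : LeggedGraph n) : Prop :=
  ∃ (fV : G.V ≃ G'.V) (fH : G.H ≃ G'.H),
    (∀ h, fH (G.ι h) = G'.ι (fH h)) ∧
    (∀ h, fV (G.ε h) = G'.ε (fH h)) ∧
    (∀ i, fH (G.leg i) = G'.leg i)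

/-- Isomorphism of weighted graphs with `n` labeled legs. -/
def WIso (G : LeggedGraph n) (w : G.V → ℕ) (G' : LeggedGraph n) (w' : G'.V → ℕ) : Prop :=
  ∃ (fV : G.V ≃ G'.V) (fH : G.H ≃ G'.H),
    (∀ h, fH (G.ι h) = G'.ι (fH h)) ∧
    (∀ h, fV (G.ε h) = G'.ε (fH h)) ∧
    (∀ i, fH (G.leg i) = G'.leg i) ∧
    (∀ v, w' (fV v) = w v)

/-- Isomorphism of metric weighted graphs with `n` labeled legs (lengths take values in
`ℝ≥0 ∪ {∞}`, realized as `ℝ≥0∞`). -/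
def MIso (G : LeggedGraph n) (w : G.V → ℕ) (l : G.H → ℝ≥0∞)
    (G' : LeggedGraph n) (w' : G'.V → ℕ) (l' : G'.H → ℝ≥0∞) : Prop :=
  ∃ (fV : G.V ≃ G'.V) (fH : G.H ≃ G'.H),
    (∀ h, fH (G.ι h) = G'.ι (fH h)) ∧
    (∀ h, fV (G.ε h) = G'.ε (fH h)) ∧
    (∀ i, fH (G.leg i) = G'.leg i) ∧
    (∀ v, w' (fV v) = w v) ∧
    (∀ h, l' (fH h) = l h)

/-- `G'` is obtained from `G` by contracting exactly one edge, which is not a loop. -/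
def OneEdgeContr (G G' : LeggedGraph n) : Prop :=
  ∃ h₀ : G.H, G.ι h₀ ≠ h₀ ∧ G.ε (G.ι h₀) ≠ G.ε h₀ ∧ GIso (G.contract {h₀}) G'

/-- `(G', w')` is obtained from `(G, w)` by the weighted contraction of exactly one edge. -/
def OneEdgeWContr (G : LeggedGraph n) (w : G.V → ℕ) (G' : LeggedGraph n)
    (w' : G'.V → ℕ) : Prop :=
  ∃ h₀ : G.H, G.ι h₀ ≠ h₀ ∧ WIso (G.contract {h₀}) (G.wcontract w {h₀}) G' w'

/-- The set of half-edges of the edges given length `0` by a point `p` of the cone. -/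
def zeroSet (G : LeggedGraph n) (p : G.Edge → ℝ≥0∞) : Set G.H :=
  {h | ∃ hne : G.ι h ≠ h, p (G.edgeMk h hne) = 0}

/-- The length function of the metric weighted graph associated to a point `p` of the
cone: each surviving edge `e` gets length `p e`, and each leg gets length `∞`. -/
noncomputable def assocLen (G : LeggedGraph n) (p : G.Edge → ℝ≥0∞)
    (h : {h : G.H // h ∉ G.sym (G.zeroSet p)}) : ℝ≥0∞ :=
  if hne : G.ι h.1 = h.1 then ⊤ else p (G.edgeMk h.1 hne)

/-- `p ∼ q`: the metric weighted graphs associated to the points `p` and `q` are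
isomorphic. -/
def ptRel (G : LeggedGraph n) (w : G.V → ℕ) (p q : G.Edge → ℝ≥0∞) : Prop :=
  MIso (G.contract (G.zeroSet p)) (G.wcontract w (G.zeroSet p)) (G.assocLen p)
       (G.contract (G.zeroSet q)) (G.wcontract w (G.zeroSet q)) (G.assocLen q)

/-- The equivalence on the closed cone `ℝ≥0^E`. -/
def ptRelNN (G : LeggedGraph n) (w : G.V → ℕ) (p q : G.Edge → ℝ≥0) : Prop :=
  G.ptRel w (fun e => (p e : ℝ≥0∞)) (fun e => (q e : ℝ≥0∞))

end LeggedGraph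

namespace LeggedGraph

variable {n : ℕ}

/-! ### Edges as pairs of half-edges -/

theorem edgeMk_iota (G : LeggedGraph n) (h : G.H) (hne : G.ι h ≠ h)
    (hne' : G.ι (G.ι h) ≠ G.ι h) : G.edgeMk (G.ι h) hne' = G.edgeMk h hne :=
  (Quot.sound (r := fun h h' : {h : G.H // G.ι h ≠ h} => (h' : G.H) = G.ι (h : G.H))
    (a := ⟨h, hne⟩) (b := ⟨G.ι h, hne'⟩) rfl).symm

theorem edgeMk_eq_iff (G : LeggedGraph n) (h h' : G.H) (hne : G.ι h ≠ h) (hne' : G.ι h' ≠ h') :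
    G.edgeMk h hne = G.edgeMk h' hne' ↔ h' = h ∨ h' = G.ι h := by
  constructor
  · intro e
    have e' := Quot.eqvGen_exact e
    have key : ∀ a b : {h : G.H // G.ι h ≠ h},
        Relation.EqvGen (fun h h' : {h : G.H // G.ι h ≠ h} => (h' : G.H) = G.ι (h : G.H)) a b →
        (b.1 = a.1 ∨ b.1 = G.ι a.1) := by
      intro a b hab
      induction hab with
      | rel x y h => exact Or.inr h
      | refl x => exact Or.inl rfl
      | symm x y _ ih =>
        rcases ih with ih | ih
        · exact Or.inl ih.symm
        · right; rw [ih, G.ι_invol]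
      | trans x y z _ _ ih1 ih2 =>
        rcases ih1 with ih1 | ih1 <;> rcases ih2 with ih2 | ih2 <;> rw [ih2, ih1]
        · exact Or.inl rfl
        · exact Or.inr rfl
        · exact Or.inr rfl
        · left; rw [G.ι_invol]
    exact key _ _ e'
  · rintro (rfl | rfl)
    · rfl
    · exact (G.edgeMk_iota h hne hne').symm

theorem mem_sym_zeroSet (G : LeggedGraph n) (p : G.Edge → ℝ≥0∞) (h : G.H) :
    h ∈ G.sym (G.zeroSet p) ↔ ∃ hne : G.ι h ≠ h, p (G.edgeMk h hne) = 0 := by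
  constructor
  · rintro ⟨h1 | h1, h2⟩
    · exact h1
    · obtain ⟨hne, hp⟩ := h1
      exact ⟨h2, by rw [← G.edgeMk_iota h h2 hne]; exact hp⟩
  · rintro ⟨hne, hp⟩
    exact ⟨Or.inl ⟨hne, hp⟩, hne⟩

instance finite_edge (G : LeggedGraph n) : Finite G.Edge := by
  unfold Edge; infer_instance

/-- Each edge consists of exactly two half-edges. -/
theorem two_mul_numEdges (G : LeggedGraph n) :
    2 * G.numEdges = Nat.card {h : G.H // G.ι h ≠ h} := by
  let _ : Fintype G.Edge := Fintype.ofFinite _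
  let _ : Fintype {h : G.H // G.ι h ≠ h} := Fintype.ofFinite _
  have h1 : ∀ e ∈ (Finset.univ : Finset G.Edge),
      (Finset.univ.filter
        (fun h : {h : G.H // G.ι h ≠ h} => G.edgeMk h.1 h.2 = e)).card = 2 := by
    intro e _
    obtain ⟨⟨h, hne⟩, rfl⟩ := Quot.exists_rep e
    have hne' : G.ι (G.ι h) ≠ G.ι h := by rw [G.ι_invol]; exact hne.symm
    have : (Finset.univ.filter
        (fun k : {h : G.H // G.ι h ≠ h} => G.edgeMk k.1 k.2 = G.edgeMk h hne))
        = {⟨h, hne⟩, ⟨G.ι h, hne'⟩} := by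
      ext k
      simp only [Finset.mem_filter, Finset.mem_univ, true_and, Finset.mem_insert,
        Finset.mem_singleton]
      rw [eq_comm, edgeMk_eq_iff, Subtype.ext_iff, Subtype.ext_iff]
    erw [this]
    rw [Finset.card_pair]
    intro hc
    exact hne (congrArg Subtype.val hc).symm
  have h2 := Finset.card_eq_sum_card_fiberwise
    (f := fun h : {h : G.H // G.ι h ≠ h} => G.edgeMk h.1 h.2)
    (s := Finset.univ) (t := Finset.univ) (fun _ _ => Finset.mem_coe.2 (Finset.mem_univ _))
  rw [Finset.sum_congr rfl h1] at h2
  rw [numEdges, Nat.card_eq_fintype_card, Nat.card_eq_fintype_card, ← Finset.card_univ,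
    ← Finset.card_univ, h2]
  simp [mul_comm]

/-! ### Betti numbers and the weights of a contraction -/

/-- A connected graph satisfies `|V| ≤ |E| + 1`. -/
theorem card_V_le (G : LeggedGraph n) (hG : G.IsConnected) :
    Nat.card G.V ≤ G.numEdges + 1 := by
  let K : SimpleGraph G.V := SimpleGraph.fromRel G.adjRel
  have hK : K.Connected := by
    have := G.neV
    refine ⟨fun v v' => ?_⟩
    have := hG v v'
    induction this with
    | rel x y h =>
      by_cases hxy : x = y
      · subst hxy; exact SimpleGraph.Reachable.refl _
      · exact SimpleGraph.Adj.reachable ((SimpleGraph.fromRel_adj _ _ _).2 ⟨hxy, Or.inl h⟩)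
    | refl x => exact SimpleGraph.Reachable.refl _
    | symm x y _ ih => exact ih.symm
    | trans x y z _ _ ih1 ih2 => exact ih1.trans ih2
  have h1 := hK.card_vert_le_card_edgeSet_add_one
  let F : G.Edge → Sym2 G.V := Quot.lift (fun h => s(G.ε h.1, G.ε (G.ι h.1))) (by
    rintro ⟨a, ha⟩ ⟨b, hb⟩ hab
    simp only at hab
    subst hab
    simp only [G.ι_invol]
    exact Sym2.eq_swap)
  have h2 : K.edgeSet ⊆ Set.range F := by
    intro e
    induction e using Sym2.ind with
    | _ a b =>
      intro hab
      rw [SimpleGraph.mem_edgeSet, SimpleGraph.fromRel_adj] at hab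
      obtain ⟨_, ⟨h, hne, rfl, rfl⟩ | ⟨h, hne, rfl, rfl⟩⟩ := hab
      · exact ⟨G.edgeMk h hne, rfl⟩
      · exact ⟨G.edgeMk h hne, Sym2.eq_swap⟩
  have h3 : Nat.card K.edgeSet ≤ Nat.card G.Edge := by
    refine (Nat.card_mono (Set.finite_range F) h2).trans ?_
    exact Finite.card_range_le F
  unfold numEdges
  omega

theorem fiber_connected (G : LeggedGraph n) (S : Set G.H) (x : Quot (G.contrRel S)) :
    (G.fiber S x).IsConnected := by
  rintro ⟨v, hv⟩ ⟨v', hv'⟩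
  have h := Quot.eqvGen_exact (hv.trans hv'.symm)
  induction h with
  | rel a b hab =>
    obtain ⟨h, hh, rfl, rfl⟩ := hab
    exact Relation.EqvGen.rel _ _
      ⟨⟨h, hh, hv⟩, fun hc => hh.2 (congrArg Subtype.val hc), rfl, rfl⟩
  | refl a => exact Relation.EqvGen.refl _
  | symm a b _ ih => exact Relation.EqvGen.symm _ _ (ih hv' hv)
  | trans a b c hab _ ih1 ih2 =>
    have hb : Quot.mk (G.contrRel S) b = x := (Quot.eqvGen_sound hab).symm.trans hv
    exact Relation.EqvGen.trans _ ⟨b, hb⟩ _ (ih1 hv hb) (ih2 hb hv')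

theorem numComps_eq_one (G : LeggedGraph n) (hG : G.IsConnected) : G.numComps = 1 := by
  unfold numComps
  rw [Nat.card_eq_one_iff_unique]
  refine ⟨⟨fun a b => ?_⟩, G.neV.map (Quot.mk _)⟩
  induction a using Quot.ind
  induction b using Quot.ind
  exact Quot.eqvGen_sound (hG _ _)

/-- The weight of a vertex `x` of `Γ/S`, shifted and doubled so that it becomes additive:
`2 (w/S(x) - 1)` is the number of contracted half-edges over `x` plus the sum of
`2 (w(v) - 1)` over the vertices `v` over `x`. -/
theorem wcontract_formula (G : LeggedGraph n) [Fintype G.V] [Fintype G.H] (w : G.V → ℕ)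
    (S : Set G.H) (x : Quot (G.contrRel S)) :
    2 * (G.wcontract w S x : ℤ) - 2 =
      (∑ h : G.H, if h ∈ G.sym S ∧ Quot.mk (G.contrRel S) (G.ε h) = x then (1 : ℤ) else 0) +
      ∑ v : G.V, if Quot.mk (G.contrRel S) v = x then 2 * (w v : ℤ) - 2 else 0 := by
  have hc := G.fiber_connected S x
  have h1 := (G.fiber S x).card_V_le hc
  have h2 := (G.fiber S x).numComps_eq_one hc
  have h3 := (G.fiber S x).two_mul_numEdges
  have h4 : Nat.card {h : (G.fiber S x).H // (G.fiber S x).ι h ≠ h} =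
      Nat.card (G.fiber S x).H :=
    Nat.card_congr (Equiv.subtypeUnivEquiv fun h hh =>
      h.2.1.2 (congrArg Subtype.val hh))
  have h5 : (∑ h : G.H, if h ∈ G.sym S ∧ Quot.mk (G.contrRel S) (G.ε h) = x
      then (1 : ℤ) else 0) = Nat.card (G.fiber S x).H := by
    rw [Finset.sum_boole]
    change _ = ((Nat.card {h : G.H // h ∈ G.sym S ∧ Quot.mk (G.contrRel S) (G.ε h) = x} : ℕ) : ℤ)
    rw [Nat.card_eq_fintype_card, Fintype.card_subtype]
  have h6 : (Nat.card (G.fiber S x).V) =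
      (Finset.univ.filter fun v : G.V => Quot.mk (G.contrRel S) v = x).card := by
    change Nat.card {v : G.V // Quot.mk (G.contrRel S) v = x} = _
    rw [Nat.card_eq_fintype_card, Fintype.card_subtype]
  have h7 : (∑ᶠ v : {v : G.V // Quot.mk (G.contrRel S) v = x}, w v.1) =
      ∑ v ∈ Finset.univ.filter (fun v : G.V => Quot.mk (G.contrRel S) v = x), w v := by
    rw [finsum_eq_sum_of_fintype]
    exact (Finset.sum_subtype _ (by simp) _).symm
  have h8 : (∑ v : G.V, if Quot.mk (G.contrRel S) v = x then 2 * (w v : ℤ) - 2 else 0) =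
      2 * (∑ᶠ v : {v : G.V // Quot.mk (G.contrRel S) v = x}, w v.1 : ℕ) -
        2 * Nat.card (G.fiber S x).V := by
    rw [h6, h7, ← Finset.sum_filter, Finset.sum_sub_distrib, ← Finset.mul_sum]
    push_cast
    simp [mul_comm]
  rw [h8, h5]
  unfold wcontract b1
  rw [h2]
  omega

/-! ### Functoriality of weighted contraction -/

/-- The canonical map from the vertices of `Γ/S` to those of `Γ/S'` when `S ⊆ S'`. -/
def proj (G : LeggedGraph n) {S S' : Set G.H} (hS : G.sym S ⊆ G.sym S') :
    Quot (G.contrRel S) → Quot (G.contrRel S') :=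
  Quot.map id (fun _ _ ⟨h, hh, h1, h2⟩ => ⟨h, hS hh, h1, h2⟩)

/-- Functoriality of weighted contraction: `w/S'` is computed from `w/S` and the half-edges of
`S' \ S` alone, by the same formula that computes `w/S'` from `w`. -/
theorem wcontract_nested (G : LeggedGraph n) (w : G.V → ℕ) {S S' : Set G.H}
    (hS : G.sym S ⊆ G.sym S') [Fintype (Quot (G.contrRel S))]
    [Fintype {h : G.H // h ∉ G.sym S}] (x : Quot (G.contrRel S')) :
    2 * (G.wcontract w S' x : ℤ) - 2 =
      (∑ h : {h : G.H // h ∉ G.sym S},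
        if h.1 ∈ G.sym S' ∧ G.proj hS (Quot.mk _ (G.ε h.1)) = x then (1 : ℤ) else 0) +
      ∑ y : Quot (G.contrRel S),
        if G.proj hS y = x then 2 * (G.wcontract w S y : ℤ) - 2 else 0 := by
  let _ : Fintype G.V := Fintype.ofFinite _
  let _ : Fintype G.H := Fintype.ofFinite _
  have hy : ∀ y : Quot (G.contrRel S),
      (if G.proj hS y = x then 2 * (G.wcontract w S y : ℤ) - 2 else 0) =
      (∑ h : G.H, if Quot.mk (G.contrRel S) (G.ε h) = y then
        (if h ∈ G.sym S ∧ G.proj hS (Quot.mk _ (G.ε h)) = x then (1 : ℤ) else 0) else 0) +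
      ∑ v : G.V, if Quot.mk (G.contrRel S) v = y then
        (if G.proj hS (Quot.mk _ v) = x then 2 * (w v : ℤ) - 2 else 0) else 0 := by
    intro y
    rw [wcontract_formula]
    split_ifs with hx
    · congr 1
      · refine Finset.sum_congr rfl fun h _ => ?_
        by_cases e : Quot.mk (G.contrRel S) (G.ε h) = y
        · simp [e, hx]
        · simp [e]
      · refine Finset.sum_congr rfl fun v _ => ?_
        by_cases e : Quot.mk (G.contrRel S) v = y
        · simp [e, hx]
        · simp [e]
    · symm
      rw [Finset.sum_eq_zero, Finset.sum_eq_zero, add_zero]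
      · intro v _
        by_cases e : Quot.mk (G.contrRel S) v = y
        · simp [e, hx]
        · simp [e]
      · intro h _
        by_cases e : Quot.mk (G.contrRel S) (G.ε h) = y
        · simp [e, hx]
        · simp [e]
  rw [Finset.sum_congr rfl fun y _ => hy y, Finset.sum_add_distrib, Finset.sum_comm,
    Finset.sum_comm (s := (Finset.univ : Finset (Quot (G.contrRel S))))
      (t := (Finset.univ : Finset G.V)), wcontract_formula, ← add_assoc]
  simp only [Finset.sum_ite_eq, Finset.mem_univ, if_true]
  congr 1
  have hs : (∑ h : {h : G.H // h ∉ G.sym S},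
      if h.1 ∈ G.sym S' ∧ G.proj hS (Quot.mk _ (G.ε h.1)) = x then (1 : ℤ) else 0) =
      ∑ h : G.H, if h ∉ G.sym S then
        (if h ∈ G.sym S' ∧ G.proj hS (Quot.mk _ (G.ε h)) = x then (1 : ℤ) else 0) else 0 := by
    rw [← Finset.sum_filter (fun h => h ∉ G.sym S)]
    exact (Finset.sum_subtype (p := fun h => h ∉ G.sym S)
      (Finset.univ.filter fun h => h ∉ G.sym S) (fun h => by simp)
      (fun h => if h ∈ G.sym S' ∧ G.proj hS (Quot.mk _ (G.ε h)) = x then (1 : ℤ) else 0)).symm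
  rw [hs, ← Finset.sum_add_distrib]
  refine Finset.sum_congr rfl fun h _ => ?_
  change (if h ∈ G.sym S' ∧ G.proj hS (Quot.mk _ (G.ε h)) = x then (1 : ℤ) else 0) = _
  by_cases e : h ∈ G.sym S
  · simp [e, hS e]
  · simp [e]

/-- A map of graphs `Γ/S → Γ/T` sending the half-edges of `S'` into those of `T'` descends, on
vertices, to a map from `Γ/S'` to `Γ/T'`. -/
theorem descend (G : LeggedGraph n) {S S' T T' : Set G.H}
    (hS : G.sym S ⊆ G.sym S') (hT : G.sym T ⊆ G.sym T')
    (fV : Quot (G.contrRel S) → Quot (G.contrRel T))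
    (fH : {h : G.H // h ∉ G.sym S} → {h : G.H // h ∉ G.sym T})
    (hι : ∀ h, (fH ⟨G.ι h.1, sym_iota_not_mem h.2⟩).1 = G.ι (fH h).1)
    (hε : ∀ h, fV (Quot.mk _ (G.ε h.1)) = Quot.mk _ (G.ε (fH h).1))
    (hφ : ∀ h, h.1 ∈ G.sym S' → (fH h).1 ∈ G.sym T') :
    ∃ gV : Quot (G.contrRel S') → Quot (G.contrRel T'),
      ∀ y, gV (G.proj hS y) = G.proj hT (fV y) := by
  refine ⟨Quot.lift (fun v => G.proj hT (fV (Quot.mk _ v))) ?_, ?_⟩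
  · rintro _ _ ⟨h, hh, rfl, rfl⟩
    by_cases e : h ∈ G.sym S
    · exact congrArg (fun y => G.proj hT (fV y)) (Quot.sound ⟨h, e, rfl, rfl⟩)
    · have e1 := hε ⟨h, e⟩
      have e2 := hε ⟨G.ι h, sym_iota_not_mem e⟩
      rw [hι ⟨h, e⟩] at e2
      simp only at e1 e2
      simp only [e1, e2]
      exact Quot.sound ⟨(fH ⟨h, e⟩).1, hφ ⟨h, e⟩ hh, rfl, rfl⟩
  · intro y
    induction y using Quot.ind
    rfl

theorem proj_surjective (G : LeggedGraph n) {S S' : Set G.H} (hS : G.sym S ⊆ G.sym S') :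
    Function.Surjective (G.proj hS) := by
  intro x
  induction x using Quot.ind with
  | _ v => exact ⟨Quot.mk _ v, rfl⟩

/-- An isomorphism `Γ/S ≅ Γ/T` of weighted graphs matching `S' \ S` with `T' \ T` induces an
isomorphism `Γ/S' ≅ Γ/T'` of weighted graphs. -/
theorem wiso_descend (G : LeggedGraph n) (w : G.V → ℕ) {S S' T T' : Set G.H}
    (hS : G.sym S ⊆ G.sym S') (hT : G.sym T ⊆ G.sym T')
    (fV : Quot (G.contrRel S) ≃ Quot (G.contrRel T))
    (fH : {h : G.H // h ∉ G.sym S} ≃ {h : G.H // h ∉ G.sym T})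
    (hι : ∀ h, (fH ⟨G.ι h.1, sym_iota_not_mem h.2⟩).1 = G.ι (fH h).1)
    (hε : ∀ h, fV (Quot.mk _ (G.ε h.1)) = Quot.mk _ (G.ε (fH h).1))
    (hw : ∀ v, G.wcontract w T (fV v) = G.wcontract w S v)
    (hφ : ∀ h, h.1 ∈ G.sym S' ↔ (fH h).1 ∈ G.sym T') :
    ∃ (gV : Quot (G.contrRel S') ≃ Quot (G.contrRel T'))
      (gH : {h : G.H // h ∉ G.sym S'} ≃ {h : G.H // h ∉ G.sym T'}),
      (∀ h, gV (Quot.mk _ (G.ε h.1)) = Quot.mk _ (G.ε (gH h).1)) ∧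
      (∀ v, G.wcontract w T' (gV v) = G.wcontract w S' v) ∧
      ∀ h, (gH h).1 = (fH ⟨h.1, fun hc => h.2 (hS hc)⟩).1 := by
  have hιs : ∀ h : {h : G.H // h ∉ G.sym T},
      (fH.symm ⟨G.ι h.1, sym_iota_not_mem h.2⟩).1 = G.ι (fH.symm h).1 := fun h => by
    have h1 : fH ⟨G.ι (fH.symm h).1, sym_iota_not_mem (fH.symm h).2⟩ =
        ⟨G.ι h.1, sym_iota_not_mem h.2⟩ :=
      Subtype.ext (by rw [hι, Equiv.apply_symm_apply])
    rw [← h1, Equiv.symm_apply_apply]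
  have hεs : ∀ h : {h : G.H // h ∉ G.sym T},
      fV.symm (Quot.mk _ (G.ε h.1)) = Quot.mk _ (G.ε (fH.symm h).1) := fun h => by
    rw [Equiv.symm_apply_eq, hε, Equiv.apply_symm_apply]
  have hφs : ∀ h : {h : G.H // h ∉ G.sym T}, (fH.symm h).1 ∈ G.sym S' ↔ h.1 ∈ G.sym T' :=
    fun h => by rw [hφ, Equiv.apply_symm_apply]
  obtain ⟨g, hg⟩ := G.descend hS hT fV fH hι hε (fun h => (hφ h).1)
  obtain ⟨k, hk⟩ := G.descend hT hS fV.symm fH.symm hιs hεs (fun h => (hφs h).2)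
  let gV : Quot (G.contrRel S') ≃ Quot (G.contrRel T') :=
    { toFun := g
      invFun := k
      left_inv := fun x => by
        obtain ⟨y, rfl⟩ := G.proj_surjective hS x
        rw [hg, hk, Equiv.symm_apply_apply]
      right_inv := fun x => by
        obtain ⟨y, rfl⟩ := G.proj_surjective hT x
        rw [hk, hg, Equiv.apply_symm_apply] }
  let gH : {h : G.H // h ∉ G.sym S'} ≃ {h : G.H // h ∉ G.sym T'} :=
    { toFun := fun h => ⟨(fH ⟨h.1, fun hc => h.2 (hS hc)⟩).1, fun hc => h.2 ((hφ _).2 hc)⟩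
      invFun := fun h =>
        ⟨(fH.symm ⟨h.1, fun hc => h.2 (hT hc)⟩).1, fun hc => h.2 ((hφs _).1 hc)⟩
      left_inv := fun h => by simp
      right_inv := fun h => by simp }
  refine ⟨gV, gH, ?_, ?_, fun _ => rfl⟩
  · intro h
    have h1 := hg (Quot.mk _ (G.ε h.1))
    rw [hε ⟨h.1, fun hc => h.2 (hS hc)⟩] at h1
    exact h1
  · intro x
    let _ : Fintype (Quot (G.contrRel S)) := Fintype.ofFinite _
    let _ : Fintype {h : G.H // h ∉ G.sym S} := Fintype.ofFinite _
    let _ : Fintype (Quot (G.contrRel T)) := Fintype.ofFinite _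
    let _ : Fintype {h : G.H // h ∉ G.sym T} := Fintype.ofFinite _
    have e1 := G.wcontract_nested w hS x
    have e2 := G.wcontract_nested w hT (gV x)
    have hV : ∀ y, (G.proj hT (fV y) = gV x ↔ G.proj hS y = x) := by
      intro y
      rw [← hg]
      exact gV.injective.eq_iff
    have s1 : (∑ h : {h : G.H // h ∉ G.sym S},
        if h.1 ∈ G.sym S' ∧ G.proj hS (Quot.mk _ (G.ε h.1)) = x then (1 : ℤ) else 0) =
        ∑ h : {h : G.H // h ∉ G.sym T},
        if h.1 ∈ G.sym T' ∧ G.proj hT (Quot.mk _ (G.ε h.1)) = gV x then (1 : ℤ) else 0 := by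
      refine Fintype.sum_equiv fH _ _ fun h => ?_
      rw [← hε, hV, hφ]
    have s2 : (∑ y : Quot (G.contrRel S),
        if G.proj hS y = x then 2 * (G.wcontract w S y : ℤ) - 2 else 0) =
        ∑ y : Quot (G.contrRel T),
        if G.proj hT y = gV x then 2 * (G.wcontract w T y : ℤ) - 2 else 0 := by
      refine Fintype.sum_equiv fV _ _ fun y => ?_
      rw [hV, hw]
    rw [s1, s2] at e1
    have e3 := e2.trans e1.symm
    have : (G.wcontract w T' (gV x) : ℤ) = G.wcontract w S' x := by linarith
    exact_mod_cast this

/-! ### Metric isomorphism is an equivalence relation -/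

theorem MIso.refl (G : LeggedGraph n) (w : G.V → ℕ) (l : G.H → ℝ≥0∞) : MIso G w l G w l :=
  ⟨Equiv.refl _, Equiv.refl _, by simp, by simp, by simp, by simp, by simp⟩

theorem MIso.symm {G G' : LeggedGraph n} {w : G.V → ℕ} {l : G.H → ℝ≥0∞}
    {w' : G'.V → ℕ} {l' : G'.H → ℝ≥0∞} (h : MIso G w l G' w' l') : MIso G' w' l' G w l := by
  obtain ⟨fV, fH, h1, h2, h3, h4, h5⟩ := h
  refine ⟨fV.symm, fH.symm, fun h => ?_, fun h => ?_, fun i => ?_, fun v => ?_, fun h => ?_⟩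
  · rw [Equiv.symm_apply_eq, h1, Equiv.apply_symm_apply]
  · rw [Equiv.symm_apply_eq, h2, Equiv.apply_symm_apply]
  · rw [Equiv.symm_apply_eq, h3]
  · rw [← h4, Equiv.apply_symm_apply]
  · rw [← h5, Equiv.apply_symm_apply]

theorem MIso.trans {G G' G'' : LeggedGraph n} {w : G.V → ℕ} {l : G.H → ℝ≥0∞}
    {w' : G'.V → ℕ} {l' : G'.H → ℝ≥0∞} {w'' : G''.V → ℕ} {l'' : G''.H → ℝ≥0∞}
    (h : MIso G w l G' w' l') (k : MIso G' w' l' G'' w'' l'') : MIso G w l G'' w'' l'' := by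
  obtain ⟨fV, fH, h1, h2, h3, h4, h5⟩ := h
  obtain ⟨kV, kH, k1, k2, k3, k4, k5⟩ := k
  exact ⟨fV.trans kV, fH.trans kH, by simp [h1, k1], by simp [h2, k2], by simp [h3, k3],
    by simp [h4, k4], by simp [h5, k5]⟩

theorem ptRelNN_equivalence (G : LeggedGraph n) (w : G.V → ℕ) :
    Equivalence (G.ptRelNN w) :=
  ⟨fun _ => MIso.refl _ _ _, fun h => MIso.symm h, fun h k => MIso.trans h k⟩

/-! ### Equivalent points and faces of the cone -/

/-- The linear map `ℝ≥0^E → ℝ≥0^E` whose coordinate `e` is the coordinate `f e` of the source,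
or `0` if `f e = none`. -/
def pull {E : Type} (f : E → Option E) (q : E → ℝ≥0) : E → ℝ≥0 :=
  fun e => (f e).elim 0 q

theorem continuous_pull {E : Type} (f : E → Option E) : Continuous (pull f) := by
  refine continuous_pi fun e => ?_
  unfold pull
  cases f e with
  | none => exact continuous_const
  | some a => exact continuous_apply a

theorem iota_contract_fixed_iff (G : LeggedGraph n) {S T : Set G.H}
    (fH : (G.contract S).H ≃ (G.contract T).H)
    (hι : ∀ h, fH ((G.contract S).ι h) = (G.contract T).ι (fH h)) (h : (G.contract S).H) :
    G.ι (fH h).1 = (fH h).1 ↔ G.ι h.1 = h.1 := by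
  have h1 : G.ι (fH h).1 = (fH h).1 ↔ (G.contract T).ι (fH h) = fH h :=
    ⟨fun e => Subtype.ext e, fun e => congrArg Subtype.val e⟩
  have h2 : G.ι h.1 = h.1 ↔ (G.contract S).ι h = h :=
    ⟨fun e => Subtype.ext e, fun e => congrArg Subtype.val e⟩
  rw [h1, h2, ← hι, fH.injective.eq_iff]

theorem assocLen_leg (G : LeggedGraph n) (p : G.Edge → ℝ≥0∞)
    (h : {h : G.H // h ∉ G.sym (G.zeroSet p)}) (hne : G.ι h.1 = h.1) : G.assocLen p h = ⊤ :=
  dif_pos hne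

theorem assocLen_edge (G : LeggedGraph n) (p : G.Edge → ℝ≥0∞)
    (h : {h : G.H // h ∉ G.sym (G.zeroSet p)}) (hne : G.ι h.1 ≠ h.1) :
    G.assocLen p h = p (G.edgeMk h.1 hne) :=
  dif_neg hne

/-- An isomorphism witnessing `p ∼ q` spreads out: it is realized by a coordinate map `f`
carrying every point `q'` of the closed face spanned by `q` to a point equivalent to `q'`. -/
theorem exists_pull (G : LeggedGraph n) (w : G.V → ℕ) (p q : G.Edge → ℝ≥0)
    (hpq : G.ptRelNN w p q) :
    ∃ f : G.Edge → Option G.Edge, pull f q = p ∧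
      ∀ q' : G.Edge → ℝ≥0, (∀ e, q e = 0 → q' e = 0) → G.ptRelNN w (pull f q') q' := by
  set P : G.Edge → ℝ≥0∞ := fun e => (p e : ℝ≥0∞) with hP
  set Q : G.Edge → ℝ≥0∞ := fun e => (q e : ℝ≥0∞) with hQ
  have hPQ : G.ptRel w P Q := hpq
  obtain ⟨fV, fH, hι, hε, hleg, hw, hl⟩ := hPQ
  have hfix := G.iota_contract_fixed_iff fH hι
  have memS : ∀ (r : G.Edge → ℝ≥0) (h : G.H) (hne : G.ι h ≠ h),
      (h ∈ G.sym (G.zeroSet fun e => (r e : ℝ≥0∞)) ↔ r (G.edgeMk h hne) = 0) := by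
    intro r h hne
    rw [mem_sym_zeroSet]
    simp [hne]
  -- `f` is well defined since `fH` carries the two halves of an edge to the two halves of an edge
  have hf : ∃ f : G.Edge → Option G.Edge, (∀ e, p e = 0 → f e = none) ∧
      ∀ (h : (G.contract (G.zeroSet P)).H) (hne : G.ι h.1 ≠ h.1),
        f (G.edgeMk h.1 hne) = some (G.edgeMk (fH h).1 (fun hc => hne ((hfix h).1 hc))) := by
    have : ∀ e : G.Edge, ∃ o : Option G.Edge, (p e = 0 → o = none) ∧
        ∀ (h : (G.contract (G.zeroSet P)).H) (hne : G.ι h.1 ≠ h.1), G.edgeMk h.1 hne = e →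
          o = some (G.edgeMk (fH h).1 (fun hc => hne ((hfix h).1 hc))) := by
      intro e
      obtain ⟨⟨h₀, hne₀⟩, rfl⟩ := Quot.exists_rep e
      change ∃ o : Option G.Edge, (p (G.edgeMk h₀ hne₀) = 0 → o = none) ∧
        ∀ (h : (G.contract (G.zeroSet P)).H) (hne : G.ι h.1 ≠ h.1),
          G.edgeMk h.1 hne = G.edgeMk h₀ hne₀ →
          o = some (G.edgeMk (fH h).1 (fun hc => hne ((hfix h).1 hc)))
      by_cases hp : p (G.edgeMk h₀ hne₀) = 0
      · refine ⟨none, fun _ => rfl, fun h hne he => ?_⟩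
        exact absurd ((memS p h.1 hne).2 (by rw [he]; exact hp)) h.2
      · have hm : h₀ ∉ G.sym (G.zeroSet P) := fun hc => hp ((memS p h₀ hne₀).1 hc)
        refine ⟨some (G.edgeMk (fH ⟨h₀, hm⟩).1 (fun hc => hne₀ ((hfix ⟨h₀, hm⟩).1 hc))),
          fun hc => absurd hc hp, fun h hne he => ?_⟩
        congr 1
        rw [edgeMk_eq_iff] at he ⊢
        rcases he with he | he
        · left
          have : (⟨h₀, hm⟩ : (G.contract (G.zeroSet P)).H) = h := Subtype.ext he
          rw [this]
        · right
          have : (⟨h₀, hm⟩ : (G.contract (G.zeroSet P)).H) = (G.contract (G.zeroSet P)).ι h :=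
            Subtype.ext he
          rw [this, hι]
          exact (G.ι_invol _).symm
    choose f h1 h2 using this
    exact ⟨f, h1, fun h hne => h2 _ h hne rfl⟩
  obtain ⟨f, hf0, hf1⟩ := hf
  refine ⟨f, ?_, ?_⟩
  · funext e
    by_cases hp : p e = 0
    · simp [pull, hf0 e hp, hp]
    · obtain ⟨⟨h, hne⟩, rfl⟩ := Quot.exists_rep e
      have hm : h ∉ G.sym (G.zeroSet P) := fun hc => hp ((memS p h hne).1 hc)
      have h1 := hf1 ⟨h, hm⟩ hne
      have h2 := hl ⟨h, hm⟩
      have hne' : G.ι (fH ⟨h, hm⟩).1 ≠ (fH ⟨h, hm⟩).1 := fun hc => hne ((hfix _).1 hc)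
      unfold assocLen at h2
      rw [dif_neg hne', dif_neg hne] at h2
      have h3 : q (G.edgeMk _ hne') = p (G.edgeMk h hne) := ENNReal.coe_injective h2
      change (f (G.edgeMk h hne)).elim 0 q = p (G.edgeMk h hne)
      rw [h1]
      exact h3
  · intro q' hq'
    have hS : G.sym (G.zeroSet P) ⊆ G.sym (G.zeroSet fun e => (pull f q' e : ℝ≥0∞)) := by
      intro h hh
      have hne : G.ι h ≠ h := hh.2
      rw [memS _ _ hne]
      have := (memS p h hne).1 hh
      simp [pull, hf0 _ this]
    have hT : G.sym (G.zeroSet Q) ⊆ G.sym (G.zeroSet fun e => (q' e : ℝ≥0∞)) := by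
      intro h hh
      have hne : G.ι h ≠ h := hh.2
      rw [memS _ _ hne]
      exact hq' _ ((memS q h hne).1 hh)
    have hval : ∀ (h : (G.contract (G.zeroSet P)).H) (hne : G.ι h.1 ≠ h.1),
        pull f q' (G.edgeMk h.1 hne) =
          q' (G.edgeMk (fH h).1 (fun hc => hne ((hfix h).1 hc))) := by
      intro h hne
      unfold pull
      rw [hf1 h hne]
      rfl
    have hφ : ∀ h : (G.contract (G.zeroSet P)).H,
        h.1 ∈ G.sym (G.zeroSet fun e => (pull f q' e : ℝ≥0∞)) ↔
          (fH h).1 ∈ G.sym (G.zeroSet fun e => (q' e : ℝ≥0∞)) := by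
      intro h
      by_cases hne : G.ι h.1 = h.1
      · exact ⟨fun hc => absurd hne hc.2, fun hc => absurd ((hfix h).2 hne) hc.2⟩
      · rw [memS _ _ hne, memS _ _ (fun hc => hne ((hfix h).1 hc)), hval h hne]
    obtain ⟨gV, gH, k2, k4, k5⟩ := G.wiso_descend w hS hT fV fH
      (fun h => congrArg Subtype.val (hι h)) hε hw hφ
    refine ⟨gV, gH, fun h => ?_, k2, fun i => ?_, k4, fun h => ?_⟩
    · refine Subtype.ext ((k5 _).trans (Eq.trans ?_ (congrArg G.ι (k5 h).symm)))
      exact congrArg Subtype.val (hι ⟨h.1, fun hc => h.2 (hS hc)⟩)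
    · exact Subtype.ext ((k5 _).trans (congrArg Subtype.val (hleg i)))
    let h₁ : (G.contract (G.zeroSet P)).H := ⟨h.1, fun hc => h.2 (hS hc)⟩
    have hk : (gH h).1 = (fH h₁).1 := k5 h
    have hfh : G.ι (gH h).1 = (gH h).1 ↔ G.ι h.1 = h.1 := by
      rw [hk]
      exact hfix h₁
    by_cases hne : G.ι h.1 = h.1
    · exact (G.assocLen_leg _ _ (hfh.2 hne)).trans (G.assocLen_leg _ _ hne).symm
    · have hne' : G.ι (gH h).1 ≠ (gH h).1 := fun hc => hne (hfh.1 hc)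
      have hv : pull f q' (G.edgeMk h.1 hne) = q' (G.edgeMk (gH h).1 hne') := by
        simp only [hk]
        exact hval h₁ hne
      exact (G.assocLen_edge _ _ hne').trans
        ((congrArg ENNReal.ofNNReal hv.symm).trans (G.assocLen_edge _ _ hne).symm)

/-- The quotient map is closed: the saturation of a closed set is a finite union of closed
sets, one for each coordinate map and each face. -/
theorem isClosedMap_mk (G : LeggedGraph n) (w : G.V → ℕ) :
    IsClosedMap (Quot.mk (G.ptRelNN w)) := by
  intro C hC
  rw [← isQuotientMap_quot_mk.isClosed_preimage]
  have hE := G.ptRelNN_equivalence w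
  -- `c = (f, T)`: a coordinate map `f`, and the set `T` of edges vanishing on a face
  let good : Set ((G.Edge → Option G.Edge) × Set G.Edge) :=
    {c | ∀ q' : G.Edge → ℝ≥0, (∀ e ∈ c.2, q' e = 0) → G.ptRelNN w (pull c.1 q') q'}
  have key : Quot.mk (G.ptRelNN w) ⁻¹' (Quot.mk (G.ptRelNN w) '' C) =
      ⋃ c ∈ good, ((⋂ e ∈ c.2, {q : G.Edge → ℝ≥0 | q e = 0}) ∩ pull c.1 ⁻¹' C) := by
    ext q
    simp only [Set.mem_preimage, Set.mem_image, Set.mem_iUnion, Set.mem_inter_iff,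
      Set.mem_iInter, Set.mem_ofPred_eq, exists_prop]
    constructor
    · rintro ⟨p, hp, hpq⟩
      have hpq' : G.ptRelNN w p q := (hE.quot_mk_eq_iff p q).1 hpq
      obtain ⟨f, hf, hf'⟩ := G.exists_pull w p q hpq'
      exact ⟨(f, {e | q e = 0}), hf', fun e he => he, by rw [hf]; exact hp⟩
    · rintro ⟨c, hc, hq, hcC⟩
      exact ⟨_, hcC, Quot.sound (hc q hq)⟩
  rw [key]
  refine Set.Finite.isClosed_biUnion (Set.toFinite _) fun c _ => ?_
  refine IsClosed.inter ?_ (hC.preimage (continuous_pull c.1))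
  exact isClosed_biInter fun e _ => isClosed_eq (continuous_apply e) continuous_const

end LeggedGraph

/-! ### Closed images of normal spaces -/

/-- A closed continuous surjection out of a `T4` space has Hausdorff image. -/
theorem t2Space_of_isClosedMap {X Y : Type*} [TopologicalSpace X] [TopologicalSpace Y]
    [T4Space X] {π : X → Y} (hc : Continuous π) (hs : Function.Surjective π)
    (hcl : IsClosedMap π) : T2Space Y := by
  have hpt : ∀ y : Y, IsClosed ({y} : Set Y) := by
    intro y
    obtain ⟨x, rfl⟩ := hs y
    simpa using hcl {x} isClosed_singleton
  refine ⟨fun a b hab => ?_⟩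
  obtain ⟨U, V, hU, hV, haU, hbV, hUV⟩ := normal_separation
    ((hpt a).preimage hc) ((hpt b).preimage hc)
    (Disjoint.preimage π (Set.disjoint_singleton.2 hab))
  refine ⟨(π '' Uᶜ)ᶜ, (π '' Vᶜ)ᶜ, (hcl _ hU.isClosed_compl).isOpen_compl,
    (hcl _ hV.isClosed_compl).isOpen_compl, ?_, ?_, ?_⟩
  · rintro ⟨x, hx, rfl⟩
    exact hx (haU rfl)
  · rintro ⟨x, hx, rfl⟩
    exact hx (hbV rfl)
  · rw [Set.disjoint_left]
    intro y h1 h2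
    obtain ⟨x, rfl⟩ := hs y
    have hxU : x ∈ U := by_contra fun hc => h1 ⟨x, hc, rfl⟩
    have hxV : x ∈ V := by_contra fun hc => h2 ⟨x, hc, rfl⟩
    exact Set.disjoint_left.1 hUV hxU hxV

open LeggedGraph

theorem stmt_14 (g n : ℕ) (G : LeggedGraph n) (w : G.V → ℕ)
    (hconn : G.IsConnected) (hstab : G.Stable w) (hgen : G.genus w = g) :
    T2Space (Quot (G.ptRelNN w)) :=
  t2Space_of_isClosedMap continuous_quot_mk Quot.mk_surjective (G.isClosedMap_mk w)
end

section
/- Fix a connected stable weighted graph (Γ, w) of genus g with n labeled legs and edge set E = E(Γ). On ℝ≥0^E define p ∼ q if and only if the n-pointed metric weighted graphs associated to p and q are isomorphic, and let π̄ : ℝ≥0^E → M̄ := ℝ≥0^E / ∼ be the quotient map, M̄ carrying the quotient topology. Then the image π̄(ℝ>0^E) of the open cone is an open and dense subset of M̄. -/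
/-!
Isomorphic metric graphs have equally many half-edges, and the graph associated to `p` has as
many half-edges as `G` exactly when no coordinate of `p` vanishes. Hence the open cone is saturated
for `∼`: it is the full preimage of its image (`preimage_image_openCone`). The open cone is open
because there are finitely many edges, so its image is open in the quotient; it is dense in the
closed cone, so its image is dense because the quotient map is continuous and surjective.
-/

open scoped ENNReal NNReal Classical

open LeggedGraph

instance LeggedGraph.finiteEdge {n : ℕ} (G : LeggedGraph n) : Finite G.Edge := by
  unfold LeggedGraph.Edge
  infer_instance

/-- The number of half-edges of the metric graph associated to a point of the closed cone. -/
noncomputable def LeggedGraph.survivors {n : ℕ} (G : LeggedGraph n) (p : G.Edge → ℝ≥0) : ℕ :=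
  Nat.card {h : G.H // h ∉ G.sym (G.zeroSet (fun e => (p e : ℝ≥0∞)))}

theorem LeggedGraph.survivors_eq_of_ptRelNN {n : ℕ} (G : LeggedGraph n) (w : G.V → ℕ)
    {p q : G.Edge → ℝ≥0} (h : G.ptRelNN w p q) : G.survivors p = G.survivors q := by
  obtain ⟨_, fH, _⟩ := h
  exact Nat.card_congr fH

theorem LeggedGraph.survivors_eq_iff {n : ℕ} (G : LeggedGraph n) (p : G.Edge → ℝ≥0) :
    G.survivors p = Nat.card G.H ↔ ∀ e, 0 < p e := by
  constructor
  · intro hc e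
    induction e using Quot.ind with
    | mk a =>
      obtain ⟨h, hne⟩ := a
      rw [pos_iff_ne_zero]
      intro h0
      have hmem : h ∈ G.sym (G.zeroSet (fun e => (p e : ℝ≥0∞))) := by
        refine ⟨Or.inl ⟨hne, ?_⟩, hne⟩
        simpa [LeggedGraph.edgeMk] using h0
      have hlt := Finite.card_subtype_lt
        (p := fun x => x ∉ G.sym (G.zeroSet (fun e => (p e : ℝ≥0∞)))) (x := h)
        (fun hn => hn hmem)
      exact absurd hc (ne_of_lt hlt)
  · intro hp
    refine Nat.card_congr (Equiv.subtypeUnivEquiv ?_)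
    rintro h ⟨h1, _⟩
    rcases h1 with ⟨hne, h0⟩ | ⟨hne, h0⟩
    · exact (hp _).ne' (ENNReal.coe_eq_zero.mp h0)
    · exact (hp _).ne' (ENNReal.coe_eq_zero.mp h0)

theorem LeggedGraph.preimage_image_openCone {n : ℕ} (G : LeggedGraph n) (w : G.V → ℕ) :
    Quot.mk (G.ptRelNN w) ⁻¹' (Quot.mk (G.ptRelNN w) '' {p : G.Edge → ℝ≥0 | ∀ e, 0 < p e}) =
      {p : G.Edge → ℝ≥0 | ∀ e, 0 < p e} := by
  refine Set.Subset.antisymm ?_ (Set.subset_preimage_image _ _)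
  rintro q ⟨p, hp, hpq⟩
  -- Equality in the quotient only gives a chain of relations, so the count is descended to it.
  have h : G.survivors p = G.survivors q :=
    congrArg (Quot.lift G.survivors fun _ _ => G.survivors_eq_of_ptRelNN w) hpq
  exact (G.survivors_eq_iff q).mp (h ▸ (G.survivors_eq_iff p).mpr hp)

theorem stmt_16 (g n : ℕ) (G : LeggedGraph n) (w : G.V → ℕ)
    (hconn : G.IsConnected) (hstab : G.Stable w) (hgen : G.genus w = g) :
    IsOpen (Quot.mk (G.ptRelNN w) '' {p : G.Edge → ℝ≥0 | ∀ e, 0 < p e}) ∧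
    Dense (Quot.mk (G.ptRelNN w) '' {p : G.Edge → ℝ≥0 | ∀ e, 0 < p e}) := by
  have hU : {p : G.Edge → ℝ≥0 | ∀ e, 0 < p e} = Set.univ.pi fun _ => Set.Ioi 0 := by
    ext p
    simp
  constructor
  · rw [← isQuotientMap_quot_mk.isOpen_preimage, G.preimage_image_openCone w, hU]
    exact isOpen_set_pi Set.finite_univ fun _ _ => isOpen_Ioi
  · refine Quot.mk_surjective.denseRange.dense_image continuous_quot_mk ?_
    rw [hU]
    exact dense_pi _ fun _ _ => dense_iff_closure_eq.mpr (by rw [closure_Ioi]; ext; simp)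
end
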